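/- (Uniform tail estimate for Palais–Smale sequences.) Assume N ≥ 2, 0 < α < N, p > (N+α)/N, and that the potential a satisfies (A₁) and (A₂). Fix a constant c* > 0. For every ε > 0 there exist λ_ε > 0 and r_ε > 0 such that: for every λ ≥ λ_ε, every c ≤ c*, and every (PS)_c sequence {u_n} ⊂ E_λ for J_λ, one has limsup_{n→∞} Σ_{x ∈ G, d(x,e) > r_ε} (R_α ∗ |u_n|^p)(x)|u_n(x)|^p ≤ ε. -/

import Mathlib

open scoped BigOperators ENNReal
open Filter

noncomputable section

namespace Choquard

variable {G : Type*}

/-- The word metric on a group with generating set `S`. -/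
def wordDist [Group G] (S : Finset G) (x y : G) : ℕ :=
  sInf {k : ℕ | ∃ l : List G, (∀ g ∈ l, g ∈ S) ∧ l.length = k ∧ x⁻¹ * y = l.prod}

/-- The closed ball of radius `r` about `c` in the word metric. -/
def ball [Group G] (S : Finset G) (c : G) (r : ℝ) : Set G :=
  {x | (wordDist S x c : ℝ) ≤ r}

/-- Polynomial growth of homogeneous dimension `N`. -/
def PolyGrowth [Group G] (S : Finset G) (N : ℕ) : Prop :=
  ∃ C₁ C₂ : ℝ, 0 < C₁ ∧ 0 < C₂ ∧ ∀ r : ℝ, 1 ≤ r →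
    C₁ * r ^ N ≤ ((ball S (1 : G) r).ncard : ℝ) ∧
    ((ball S (1 : G) r).ncard : ℝ) ≤ C₂ * r ^ N

/-- Riesz-type asymptotics for the kernel `R`. -/
def RieszKernel [Group G] (S : Finset G) (N : ℕ) (α : ℝ) (R : G → G → ℝ) : Prop :=
  (∀ x y, 0 < R x y) ∧
  ∃ c₁ c₂ : ℝ, 0 < c₁ ∧ 0 < c₂ ∧ ∀ x y : G, x ≠ y →
    c₁ * (wordDist S x y : ℝ) ^ (α - (N : ℝ)) ≤ R x y ∧
    R x y ≤ c₂ * (wordDist S x y : ℝ) ^ (α - (N : ℝ))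

/-- Convolution `(R ∗ f)(x) = Σ_{y ≠ x} R x y f y`. -/
def conv [DecidableEq G] (R : G → G → ℝ) (f : G → ℝ) (x : G) : ℝ :=
  ∑' y, if y = x then 0 else R x y * f y

/-- The convolution as an extended-nonnegative-real valued sum. -/
def convE [DecidableEq G] (R : G → G → ℝ) (f : G → ℝ) (x : G) : ℝ≥0∞ :=
  ∑' y, if y = x then 0 else ENNReal.ofReal (R x y * f y)

/-- Membership in `ℓ^q(G)`. -/
def Memlp (q : ℝ) (u : G → ℝ) : Prop := Summable fun x => |u x| ^ q

/-- The `ℓ^q` norm. -/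
def lpNorm (q : ℝ) (u : G → ℝ) : ℝ := (∑' x, |u x| ^ q) ^ (1 / q)

/-- The `ℓ^∞` norm. -/
def supNorm (u : G → ℝ) : ℝ := ⨆ x, |u x|

/-- The graph Laplacian `Δu(x) = Σ_{s ∈ S} (u(xs) - u(x))`. -/
def lap [Group G] (S : Finset G) (u : G → ℝ) (x : G) : ℝ :=
  ∑ s ∈ S, (u (x * s) - u x)

/-- The gradient form `∇u∇v(x) = (1/2) Σ_{s ∈ S} (u(xs)-u(x))(v(xs)-v(x))`. -/
def grad [Group G] (S : Finset G) (u v : G → ℝ) (x : G) : ℝ :=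
  (1 / 2) * ∑ s ∈ S, (u (x * s) - u x) * (v (x * s) - v x)

/-- The density `|Δu|² + |∇u|² + (1 + λa)u²`. -/
def eDensity [Group G] (S : Finset G) (a : G → ℝ) (lam : ℝ) (u : G → ℝ) (x : G) : ℝ :=
  (lap S u x) ^ 2 + grad S u u x + (1 + lam * a x) * (u x) ^ 2

/-- Membership in the space `E_λ`. -/
def MemE [Group G] (S : Finset G) (a : G → ℝ) (lam : ℝ) (u : G → ℝ) : Prop :=
  Summable (eDensity S a lam u)

/-- `‖u‖²_{E_λ}`. -/
def normEsq [Group G] (S : Finset G) (a : G → ℝ) (lam : ℝ) (u : G → ℝ) : ℝ :=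
  ∑' x, eDensity S a lam u x

/-- `‖u‖_{E_λ}`. -/
def normE [Group G] (S : Finset G) (a : G → ℝ) (lam : ℝ) (u : G → ℝ) : ℝ :=
  Real.sqrt (normEsq S a lam u)

/-- The inner product `⟨u, v⟩_{E_λ}`. -/
def innerE [Group G] (S : Finset G) (a : G → ℝ) (lam : ℝ) (u v : G → ℝ) : ℝ :=
  ∑' x, (lap S u x * lap S v x + grad S u v x + (1 + lam * a x) * (u x * v x))

/-- The nonlocal term `Σ_G (R_α ∗ |u|^p)|u|^p`. -/
def Dterm [DecidableEq G] (R : G → G → ℝ) (p : ℝ) (u : G → ℝ) : ℝ :=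
  ∑' x, conv R (fun y => |u y| ^ p) x * |u x| ^ p

/-- The nonlocal pairing `Σ_G (R_α ∗ |u|^p)|u|^{p-2} u v`. -/
def Kterm [DecidableEq G] (R : G → G → ℝ) (p : ℝ) (u v : G → ℝ) : ℝ :=
  ∑' x, conv R (fun y => |u y| ^ p) x * (|u x| ^ (p - 2) * u x * v x)

/-- The energy functional `J_λ`. -/
def Jfun [Group G] [DecidableEq G] (S : Finset G) (a : G → ℝ) (lam : ℝ)
    (R : G → G → ℝ) (p : ℝ) (u : G → ℝ) : ℝ :=
  (1 / 2) * normEsq S a lam u - (1 / (2 * p)) * Dterm R p u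

/-- The derivative pairing `(J'_λ(u), v)`. -/
def Jd [Group G] [DecidableEq G] (S : Finset G) (a : G → ℝ) (lam : ℝ)
    (R : G → G → ℝ) (p : ℝ) (u v : G → ℝ) : ℝ :=
  innerE S a lam u v - Kterm R p u v

/-- The Nehari manifold `N_λ`. -/
def nehari [Group G] [DecidableEq G] (S : Finset G) (a : G → ℝ) (lam : ℝ)
    (R : G → G → ℝ) (p : ℝ) : Set (G → ℝ) :=
  {u | MemE S a lam u ∧ u ≠ 0 ∧ Jd S a lam R p u u = 0}

/-- `m_λ = inf_{N_λ} J_λ`. -/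
def mlam [Group G] [DecidableEq G] (S : Finset G) (a : G → ℝ) (lam : ℝ)
    (R : G → G → ℝ) (p : ℝ) : ℝ :=
  sInf (Jfun S a lam R p '' nehari S a lam R p)

/-- The norm of `J'_λ(u)` in the dual space `E_λ*`. -/
def dualNorm [Group G] [DecidableEq G] (S : Finset G) (a : G → ℝ) (lam : ℝ)
    (R : G → G → ℝ) (p : ℝ) (u : G → ℝ) : ℝ :=
  sSup {t : ℝ | ∃ v, MemE S a lam v ∧ normEsq S a lam v ≤ 1 ∧ t = |Jd S a lam R p u v|}

/-- `(PS)_c` sequence for `J_λ`. -/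
def PSseq [Group G] [DecidableEq G] (S : Finset G) (a : G → ℝ) (lam : ℝ)
    (R : G → G → ℝ) (p : ℝ) (c : ℝ) (U : ℕ → G → ℝ) : Prop :=
  (∀ n, MemE S a lam (U n)) ∧
  Tendsto (fun n => Jfun S a lam R p (U n)) atTop (nhds c) ∧
  Tendsto (fun n => dualNorm S a lam R p (U n)) atTop (nhds 0)

/-- The Cayley graph of `(G, S)`. -/
def cayley [Group G] (S : Finset G) : SimpleGraph G :=
  SimpleGraph.fromRel (fun x y => x⁻¹ * y ∈ S)

/-- Condition (A₁): the potential well `Ω = {a = 0}` is nonempty, finite and connected. -/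
def CondA1 [Group G] (S : Finset G) (a : G → ℝ) : Prop :=
  {x | a x = 0}.Nonempty ∧ {x | a x = 0}.Finite ∧
  ((cayley S).induce {x | a x = 0}).Connected

/-- Condition (A₂): some sublevel set `{a ≤ M}` is finite and nonempty. -/
def CondA2 (a : G → ℝ) : Prop :=
  ∃ M : ℝ, 0 < M ∧ {x | a x ≤ M}.Finite ∧ {x | a x ≤ M}.Nonempty

/-- The density `|Δu|² + |∇u|² + u²` of the `W^{2,2}` norm. -/
def wDensity [Group G] (S : Finset G) (u : G → ℝ) (x : G) : ℝ :=
  (lap S u x) ^ 2 + grad S u u x + (u x) ^ 2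

/-- Membership in `W^{2,2}(G)`. -/
def MemW [Group G] (S : Finset G) (u : G → ℝ) : Prop := Summable (wDensity S u)

/-- `‖u‖²_{W^{2,2}}`. -/
def normWsq [Group G] (S : Finset G) (u : G → ℝ) : ℝ := ∑' x, wDensity S u x

/-- Membership in `E(Ω)`: vanishing outside `Ω`. -/
def MemEOm (Ω : Set G) (u : G → ℝ) : Prop := ∀ x ∉ Ω, u x = 0

/-- `‖u‖²_{E(Ω)}`. -/
def normOmSq [Group G] (S : Finset G) (Ω : Set G) (u : G → ℝ) : ℝ :=
  (∑' x, ((lap S u x) ^ 2 + grad S u u x)) + ∑' x : Ω, (u (x : G)) ^ 2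

/-- The nonlocal term over `Ω`. -/
def DtermOm [DecidableEq G] (Ω : Set G) (R : G → G → ℝ) (p : ℝ) (u : G → ℝ) : ℝ :=
  ∑' x : Ω, conv R (fun y => |u y| ^ p) (x : G) * |u (x : G)| ^ p

/-- The limiting energy functional `J_Ω`. -/
def JOm [Group G] [DecidableEq G] (S : Finset G) (Ω : Set G) (R : G → G → ℝ) (p : ℝ)
    (u : G → ℝ) : ℝ :=
  (1 / 2) * normOmSq S Ω u - (1 / (2 * p)) * DtermOm Ω R p u

/-- The derivative pairing `(J'_Ω(u), v)`. -/
def JdOm [Group G] [DecidableEq G] (S : Finset G) (Ω : Set G) (R : G → G → ℝ) (p : ℝ)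
    (u v : G → ℝ) : ℝ :=
  (∑' x, (lap S u x * lap S v x + grad S u v x)) + (∑' x : Ω, u (x : G) * v (x : G))
    - ∑' x : Ω, conv R (fun y => |u y| ^ p) (x : G) * (|u (x : G)| ^ (p - 2) * u (x : G) * v (x : G))

/-- The Nehari manifold `N_Ω`. -/
def nehariOm [Group G] [DecidableEq G] (S : Finset G) (Ω : Set G) (R : G → G → ℝ)
    (p : ℝ) : Set (G → ℝ) :=
  {u | MemEOm Ω u ∧ u ≠ 0 ∧ JdOm S Ω R p u u = 0}

/-- `m_Ω = inf_{N_Ω} J_Ω`. -/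
def mOm [Group G] [DecidableEq G] (S : Finset G) (Ω : Set G) (R : G → G → ℝ) (p : ℝ) : ℝ :=
  sInf (JOm S Ω R p '' nehariOm S Ω R p)

/-! The growth bound puts `d(·, e)^{α - N}` in `ℓ^t(G)` as soon as `t (N - α) > N`. With
`t = 1 / (2 - q)` this reads `N + α < N q`, so the hypothesis on `p` leaves room for some `q` with
`1 < q < 2` and `q ≤ p`, and Young's inequality for `|u|^p, |v|^p ∈ ℓ^{2/q}` bounds
`Σ (R ∗ |v|^p)|u|^p` by `C ‖u‖₂^p ‖v‖₂^p`. Testing `J'(u_n)` against `u_n` then bounds the energies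
`‖u_n‖²` eventually by a constant `K` depending only on `p` and `c*`. Outside a large ball `a ≥ M`,
so the `ℓ²` mass of `u_n` there is at most `K / (λ M)`; the same inequality with `u` replaced by the
restriction of `u_n` to the complement of the ball bounds the tail by
`C (K / (λ M))^{p/2} K^{p/2}`, which vanishes as `λ → ∞`. -/

section YoungConvolution

variable {ι κ : Type*}

theorem tsum_prod_rpow_le_prod_tsum_rpow (s : Finset κ) (f : κ → ι → ℝ≥0∞) {w : κ → ℝ}
    (hw : ∀ j ∈ s, 0 ≤ w j) (hw1 : ∑ j ∈ s, w j = 1) :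
    ∑' i, ∏ j ∈ s, f j i ^ w j ≤ ∏ j ∈ s, (∑' i, f j i) ^ w j := by
  let _ : MeasurableSpace ι := ⊤
  simpa only [MeasureTheory.lintegral_count] using
    ENNReal.lintegral_prod_norm_pow_le (μ := MeasureTheory.Measure.count) s
      (fun j _ => (measurable_from_top (f := f j)).aemeasurable) hw1 hw

theorem tsum_rpow_le_rpow_tsum (f : ι → ℝ≥0∞) {r : ℝ} (hr : 1 ≤ r) :
    ∑' i, f i ^ r ≤ (∑' i, f i) ^ r := by
  have split (t : ℝ≥0∞) : t ^ r = t * t ^ (r - 1) := by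
    conv_rhs => rw [← ENNReal.rpow_one t, ← ENNReal.rpow_mul, one_mul,
      ← ENNReal.rpow_add_of_nonneg _ _ zero_le_one (sub_nonneg.2 hr), add_sub_cancel]
  calc ∑' i, f i ^ r
      = ∑' i, f i * f i ^ (r - 1) := by simp only [split]
    _ ≤ ∑' i, f i * (∑' j, f j) ^ (r - 1) := by
        gcongr with i
        exact ENNReal.le_tsum i
    _ = (∑' i, f i) ^ r := by rw [ENNReal.tsum_mul_right, ← split]

theorem mul_rpow_regroup (a b c : ℝ≥0∞) {ρ σ τ : ℝ} (hρ : 0 ≤ ρ) (hσ : 0 ≤ σ) (hτ : 0 ≤ τ) :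
    (a * b) ^ ρ * (a * c) ^ σ * (b * c) ^ τ = a ^ (ρ + σ) * b ^ (ρ + τ) * c ^ (σ + τ) := by
  simp only [ENNReal.mul_rpow_of_nonneg, ENNReal.rpow_add_of_nonneg, hρ, hσ, hτ]
  ring

variable [Group G]

/-- Writing `f g h = (fʳ gˢ) ^ (1 - 1/t) (fʳ hᵗ) ^ (1 - 1/s) (gˢ hᵗ) ^ (1 - 1/r)` reduces Young's
inequality to Hölder's on `G × G`, because each factor has a sum that splits as a product. -/
theorem tsum_convolution_le {r s t : ℝ} (hr : 1 ≤ r) (hs : 1 ≤ s) (ht : 1 ≤ t)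
    (hrst : r⁻¹ + s⁻¹ + t⁻¹ = 2) (f g h : G → ℝ≥0∞) :
    ∑' x, ∑' y, f x * g y * h (y⁻¹ * x) ≤
      (∑' x, f x ^ r) ^ r⁻¹ * (∑' x, g x ^ s) ^ s⁻¹ * (∑' x, h x ^ t) ^ t⁻¹ := by
  have hr' : 0 ≤ 1 - r⁻¹ := sub_nonneg.2 (inv_le_one_of_one_le₀ hr)
  have hs' : 0 ≤ 1 - s⁻¹ := sub_nonneg.2 (inv_le_one_of_one_le₀ hs)
  have ht' : 0 ≤ 1 - t⁻¹ := sub_nonneg.2 (inv_le_one_of_one_le₀ ht)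
  have regroup (a b c : ℝ≥0∞) : (a * b) ^ (1 - t⁻¹) * (a * c) ^ (1 - s⁻¹) * (b * c) ^ (1 - r⁻¹) =
      a ^ r⁻¹ * b ^ s⁻¹ * c ^ t⁻¹ := by
    rw [mul_rpow_regroup a b c ht' hs' hr']
    congr 3 <;> linarith
  have sum_fg : ∑' z : G × G, f z.1 ^ r * g z.2 ^ s = (∑' x, f x ^ r) * ∑' y, g y ^ s := by
    simp only [ENNReal.tsum_prod (f := fun x y => f x ^ r * g y ^ s), ENNReal.tsum_mul_left,
      ENNReal.tsum_mul_right]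
  have sum_fh : ∑' z : G × G, f z.1 ^ r * h (z.2⁻¹ * z.1) ^ t =
      (∑' x, f x ^ r) * ∑' y, h y ^ t := by
    rw [ENNReal.tsum_prod (f := fun x y => f x ^ r * h (y⁻¹ * x) ^ t), ← ENNReal.tsum_mul_right]
    refine tsum_congr fun x => ?_
    rw [ENNReal.tsum_mul_left]
    exact congrArg _ (((Equiv.inv G).trans (Equiv.mulRight x)).tsum_eq fun y => h y ^ t)
  have sum_gh : ∑' z : G × G, g z.2 ^ s * h (z.2⁻¹ * z.1) ^ t =
      (∑' x, g x ^ s) * ∑' y, h y ^ t := by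
    rw [ENNReal.tsum_prod (f := fun x y => g y ^ s * h (y⁻¹ * x) ^ t), ENNReal.tsum_comm,
      ← ENNReal.tsum_mul_right]
    refine tsum_congr fun y => ?_
    rw [ENNReal.tsum_mul_left]
    exact congrArg _ ((Equiv.mulLeft y⁻¹).tsum_eq fun x => h x ^ t)
  have holder := tsum_prod_rpow_le_prod_tsum_rpow Finset.univ
    ![fun z : G × G => f z.1 ^ r * g z.2 ^ s, fun z => f z.1 ^ r * h (z.2⁻¹ * z.1) ^ t,
      fun z => g z.2 ^ s * h (z.2⁻¹ * z.1) ^ t] (w := ![1 - t⁻¹, 1 - s⁻¹, 1 - r⁻¹])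
    (by simp [Fin.forall_fin_succ, ht', hs', hr']) (by simp [Fin.sum_univ_three]; linarith)
  have hr0 : r ≠ 0 := by positivity
  have hs0 : s ≠ 0 := by positivity
  have ht0 : t ≠ 0 := by positivity
  simpa [Fin.prod_univ_three, sum_fg, sum_fh, sum_gh, regroup, ENNReal.rpow_rpow_inv, hr0, hs0, ht0,
    ENNReal.tsum_prod (f := fun x y => f x * g y * h (y⁻¹ * x))] using holder

end YoungConvolution

section PowerWeights

variable {ι κ : Type*}

theorem summable_of_summable_ncard_fiber_mul {f : ι → ℝ} {b : κ → ℝ} (π : ι → κ)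
    (hf : ∀ i, 0 ≤ f i) (hfb : ∀ i, f i ≤ b (π i)) (hfin : ∀ k, (π ⁻¹' {k}).Finite)
    (hb : Summable fun k => ((π ⁻¹' {k}).ncard : ℝ) * b k) : Summable f := by
  refine (Equiv.sigmaFiberEquiv π).summable_iff.1 ((summable_sigma_of_nonneg fun _ => hf _).2 ?_)
  have hfiber (k : κ) : Finite {i // π i = k} := (hfin k).to_subtype
  refine ⟨fun k => Summable.of_finite,
    hb.of_nonneg_of_le (fun k => tsum_nonneg fun _ => hf _) fun k => ?_⟩
  have := Fintype.ofFinite {i // π i = k}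
  calc ∑' i : {i // π i = k}, f i
      = ∑ i : {i // π i = k}, f i := tsum_fintype _
    _ ≤ ∑ _i : {i // π i = k}, b k := by
        gcongr with i
        exact (hfb i).trans_eq (congrArg b i.2)
    _ = (Nat.card {i // π i = k} : ℝ) * b k := by simp

theorem summable_natCast_rpow_neg_of_ncard_le {ψ : ι → ℕ} {C d β : ℝ} (hd : 0 ≤ d) (hdβ : d < β)
    (hfin : ∀ r : ℝ, 1 ≤ r → {i | (ψ i : ℝ) ≤ r}.Finite)
    (hcard : ∀ r : ℝ, 1 ≤ r → ({i | (ψ i : ℝ) ≤ r}.ncard : ℝ) ≤ C * r ^ d) :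
    Summable fun i => (ψ i : ℝ) ^ (-β) := by
  have one_le_two_pow (m : ℕ) : (1 : ℝ) ≤ 2 ^ (m + 1) := one_le_pow₀ one_le_two
  have shell_subset (m : ℕ) : (fun i => Nat.log 2 (ψ i)) ⁻¹' {m} ⊆
      {i | (ψ i : ℝ) ≤ 2 ^ (m + 1)} := by
    rintro i rfl
    exact_mod_cast (Nat.lt_pow_succ_log_self one_lt_two (ψ i)).le
  have weight_le (i : ι) : (ψ i : ℝ) ^ (-β) ≤ ((2 : ℝ) ^ Nat.log 2 (ψ i)) ^ (-β) := by
    rcases eq_or_ne (ψ i) 0 with h0 | h0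
    · simpa [h0] using Real.zero_rpow_le_one (-β)
    · exact Real.rpow_le_rpow_of_nonpos (by positivity)
        (by exact_mod_cast Nat.pow_log_le_self 2 h0) (by linarith)
  refine summable_of_summable_ncard_fiber_mul (b := fun m => ((2 : ℝ) ^ m) ^ (-β))
    (fun i => Nat.log 2 (ψ i)) (fun _ => by positivity) weight_le
    (fun m => (hfin _ (one_le_two_pow m)).subset (shell_subset m)) ?_
  have ratio_lt_one : (2 : ℝ) ^ d * 2 ^ (-β) < 1 := by
    rw [← Real.rpow_add two_pos]
    exact Real.rpow_lt_one_of_one_lt_of_neg one_lt_two (by linarith)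
  refine ((summable_geometric_of_lt_one (by positivity) ratio_lt_one).mul_left
    (C * 2 ^ d)).of_nonneg_of_le (fun m => by positivity) fun m => ?_
  calc (((fun i => Nat.log 2 (ψ i)) ⁻¹' {m}).ncard : ℝ) * ((2 : ℝ) ^ m) ^ (-β)
      ≤ C * ((2 : ℝ) ^ (m + 1)) ^ d * ((2 : ℝ) ^ m) ^ (-β) := by
        gcongr
        exact (Nat.cast_le.2 (Set.ncard_le_ncard (shell_subset m)
          (hfin _ (one_le_two_pow m)))).trans (hcard _ (one_le_two_pow m))
    _ = C * 2 ^ d * (2 ^ d * 2 ^ (-β)) ^ m := by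
        rw [← Real.rpow_pow_comm two_pos.le, ← Real.rpow_pow_comm two_pos.le]
        ring

end PowerWeights

section SumsOfPowers

variable {ι : Type*} {p : ℝ}

theorem tsum_rpow_half_rpow_le (f : ι → ℝ≥0∞) {q : ℝ} (hq : 0 < q) (hqp : q ≤ p) :
    (∑' i, (f i ^ (p / 2)) ^ (2 / q)) ^ (2 / q)⁻¹ ≤ (∑' i, f i) ^ (p / 2) := by
  have hexp : p / 2 * (2 / q) = p / q := by field_simp
  calc (∑' i, (f i ^ (p / 2)) ^ (2 / q)) ^ (2 / q)⁻¹
      = (∑' i, f i ^ (p / q)) ^ (2 / q)⁻¹ := by simp only [← ENNReal.rpow_mul, hexp]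
    _ ≤ ((∑' i, f i) ^ (p / q)) ^ (2 / q)⁻¹ := by
        gcongr
        exact tsum_rpow_le_rpow_tsum f ((one_le_div hq).2 hqp)
    _ = (∑' i, f i) ^ (p / 2) := by
        rw [← ENNReal.rpow_mul, ← hexp, mul_inv_cancel_right₀ (by positivity)]

theorem ofReal_abs_rpow_eq (b : ℝ) (hp : 0 ≤ p) :
    ENNReal.ofReal (|b| ^ p) = ENNReal.ofReal (b ^ 2) ^ (p / 2) := by
  rw [ENNReal.ofReal_rpow_of_nonneg (sq_nonneg b) (by positivity), ← sq_abs, ← Real.rpow_natCast,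
    ← Real.rpow_mul (abs_nonneg b)]
  congr 2
  push_cast
  ring

theorem summable_and_tsum_le_of_tsum_ofReal_le {f : ι → ℝ} (hf : ∀ i, 0 ≤ f i) {B : ℝ}
    (hB : 0 ≤ B) (h : ∑' i, ENNReal.ofReal (f i) ≤ ENNReal.ofReal B) :
    Summable f ∧ ∑' i, f i ≤ B := by
  have hsum : Summable f := by
    simpa only [ENNReal.toReal_ofReal (hf _)] using
      ENNReal.summable_toReal (h.trans_lt ENNReal.ofReal_lt_top).ne
  rw [← ENNReal.ofReal_tsum_of_nonneg hf hsum] at h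
  exact ⟨hsum, (ENNReal.ofReal_le_ofReal_iff hB).1 h⟩

end SumsOfPowers

section Convolution

variable [DecidableEq G] {R : G → G → ℝ}

theorem conv_nonneg (hR : ∀ x y, 0 ≤ R x y) {f : G → ℝ} (hf : ∀ y, 0 ≤ f y)
    (x : G) : 0 ≤ conv R f x :=
  tsum_nonneg fun y => by
    split_ifs
    exacts [le_rfl, mul_nonneg (hR x y) (hf y)]

theorem ofReal_conv_le_convE (hR : ∀ x y, 0 ≤ R x y) {f : G → ℝ}
    (hf : ∀ y, 0 ≤ f y) (x : G) : ENNReal.ofReal (conv R f x) ≤ convE R f x := by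
  have hterm (y : G) : 0 ≤ if y = x then 0 else R x y * f y := by
    split_ifs
    exacts [le_rfl, mul_nonneg (hR x y) (hf y)]
  by_cases hsum : Summable fun y => if y = x then 0 else R x y * f y
  · simp [conv, convE, ENNReal.ofReal_tsum_of_nonneg hterm hsum, apply_ite ENNReal.ofReal]
  · simp [conv, tsum_eq_zero_of_not_summable hsum]

/-- The Hardy–Littlewood–Sobolev inequality with constant `C` for the kernel `R`, in the form
`Σ (R ∗ |v|^p)|u|^p ≤ C ‖u‖₂^p ‖v‖₂^p` on `ℓ²(G)`, including convergence of the left-hand side; the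
powers `p / 2` are applied to the squared `ℓ²` norms. -/
def HLSBound (R : G → G → ℝ) (p C : ℝ) : Prop :=
  ∀ u v : G → ℝ, (Summable fun x => u x ^ 2) → (Summable fun x => v x ^ 2) →
    (Summable fun x => conv R (fun y => |v y| ^ p) x * |u x| ^ p) ∧
    ∑' x, conv R (fun y => |v y| ^ p) x * |u x| ^ p ≤
      C * (∑' x, u x ^ 2) ^ (p / 2) * (∑' x, v x ^ 2) ^ (p / 2)

end Convolution

section RieszKernel

variable [Group G] {S : Finset G} {N : ℕ} {α β p : ℝ} {R : G → G → ℝ}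

theorem wordDist_inv_mul_one (x y : G) : wordDist S (y⁻¹ * x) 1 = wordDist S x y := by
  simp [wordDist]

theorem PolyGrowth.finite_ball (hG : PolyGrowth S N) {r : ℝ} (hr : 1 ≤ r) :
    (ball S (1 : G) r).Finite := by
  obtain ⟨C₁, _, hC₁, -, hball⟩ := hG
  refine Set.finite_of_ncard_pos ?_
  exact_mod_cast (by positivity : 0 < C₁ * r ^ N).trans_le (hball r hr).1

theorem PolyGrowth.summable_wordDist_rpow_neg (hG : PolyGrowth S N) (hβ : N < β) :
    Summable fun x : G => (wordDist S x 1 : ℝ) ^ (-β) := by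
  have ⟨_, C₂, _, _, hball⟩ := hG
  exact summable_natCast_rpow_neg_of_ncard_le (C := C₂) N.cast_nonneg hβ
    (fun r hr => hG.finite_ball hr) fun r hr => by simpa using! (hball r hr).2

theorem RieszKernel.exists_le_translation_invariant (hR : RieszKernel S N α R) (hG : PolyGrowth S N)
    {t : ℝ} (hN : N < (N - α) * t) :
    ∃ h : G → ℝ, (∀ x, 0 ≤ h x) ∧ (∀ x y, x ≠ y → R x y ≤ h (y⁻¹ * x)) ∧
      Summable fun x => h x ^ t := by
  obtain ⟨-, _, c₂, -, hc₂, hR⟩ := hR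
  refine ⟨fun x => c₂ * (wordDist S x 1 : ℝ) ^ (α - N), fun x => by positivity,
    fun x y hxy => ?_, ?_⟩
  · simpa only [wordDist_inv_mul_one] using (hR x y hxy).2
  · refine ((hG.summable_wordDist_rpow_neg hN).mul_left (c₂ ^ t)).congr fun x => ?_
    rw [Real.mul_rpow hc₂.le (by positivity), ← Real.rpow_mul (by positivity)]
    ring_nf

theorem tsum_convE_rpow_mul_le [DecidableEq G] {h : G → ℝ}
    (hRh : ∀ x y, x ≠ y → R x y ≤ h (y⁻¹ * x)) {q : ℝ} (hq1 : 1 ≤ q) (hq2 : q < 2) (hqp : q ≤ p)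
    (u v : G → ℝ) :
    ∑' x, convE R (fun y => |v y| ^ p) x * ENNReal.ofReal (|u x| ^ p) ≤
      (∑' x, ENNReal.ofReal (u x ^ 2)) ^ (p / 2) * (∑' x, ENNReal.ofReal (v x ^ 2)) ^ (p / 2) *
        (∑' x, ENNReal.ofReal (h x) ^ (2 - q)⁻¹) ^ (2 - q) := by
  have hp : 0 ≤ p := by linarith
  have hconv (x : G) : convE R (fun y => |v y| ^ p) x * ENNReal.ofReal (|u x| ^ p) ≤
      ∑' y, ENNReal.ofReal (|u x| ^ p) * ENNReal.ofReal (|v y| ^ p) *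
        ENNReal.ofReal (h (y⁻¹ * x)) := by
    rw [convE, ← ENNReal.tsum_mul_right]
    refine ENNReal.tsum_le_tsum fun y => ?_
    split_ifs with hyx
    · simp
    · rw [ENNReal.ofReal_mul' (by positivity), mul_comm, mul_comm (ENNReal.ofReal (R x y)),
        ← mul_assoc]
      gcongr
      exact hRh x y (Ne.symm hyx)
  have hexp : (2 / q)⁻¹ + (2 / q)⁻¹ + (2 - q)⁻¹⁻¹ = 2 := by
    rw [inv_div, inv_inv]
    ring
  have h2q : 1 ≤ 2 / q := (one_le_div (by linarith)).2 hq2.le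
  calc _ ≤ _ := ENNReal.tsum_le_tsum hconv
    _ ≤ _ := tsum_convolution_le h2q h2q ((one_le_inv₀ (by linarith)).2 (by linarith)) hexp
        (fun x => ENNReal.ofReal (|u x| ^ p)) (fun x => ENNReal.ofReal (|v x| ^ p))
        (fun x => ENNReal.ofReal (h x))
    _ ≤ _ := by
        simp only [ofReal_abs_rpow_eq _ hp, inv_inv]
        gcongr <;> exact tsum_rpow_half_rpow_le _ (by linarith) hqp

theorem hlsBound_of_le_translation_invariant [DecidableEq G] (hR : ∀ x y, 0 ≤ R x y) {h : G → ℝ}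
    (hh : ∀ x, 0 ≤ h x) (hRh : ∀ x y, x ≠ y → R x y ≤ h (y⁻¹ * x)) {q : ℝ} (hq1 : 1 ≤ q)
    (hq2 : q < 2) (hqp : q ≤ p) (hsum : Summable fun x => h x ^ (2 - q)⁻¹) :
    HLSBound R p ((∑' x, h x ^ (2 - q)⁻¹) ^ (2 - q)) := by
  intro u v hu hv
  have hp : 0 ≤ p / 2 := by linarith
  have hq : 0 < 2 - q := by linarith
  have sq_nonneg_tsum (w : G → ℝ) : 0 ≤ ∑' x, w x ^ 2 := tsum_nonneg fun x => sq_nonneg _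
  have hpow_sq (w : G → ℝ) : 0 ≤ (∑' x, w x ^ 2) ^ (p / 2) :=
    Real.rpow_nonneg (sq_nonneg_tsum w) _
  have hpow (x : G) : 0 ≤ h x ^ (2 - q)⁻¹ := Real.rpow_nonneg (hh x) _
  have hpow_tsum : 0 ≤ ∑' x, h x ^ (2 - q)⁻¹ := tsum_nonneg hpow
  refine summable_and_tsum_le_of_tsum_ofReal_le (fun x => mul_nonneg
    (conv_nonneg hR (fun y => by positivity) x) (by positivity))
    (mul_nonneg (mul_nonneg (Real.rpow_nonneg hpow_tsum _) (hpow_sq u)) (hpow_sq v)) ?_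
  calc ∑' x, ENNReal.ofReal (conv R (fun y => |v y| ^ p) x * |u x| ^ p)
      ≤ ∑' x, convE R (fun y => |v y| ^ p) x * ENNReal.ofReal (|u x| ^ p) := by
        gcongr with x
        rw [ENNReal.ofReal_mul' (by positivity)]
        gcongr
        exact ofReal_conv_le_convE hR (fun y => by positivity) x
    _ ≤ _ := tsum_convE_rpow_mul_le hRh hq1 hq2 hqp u v
    _ = ENNReal.ofReal _ := by
        simp only [ENNReal.ofReal_rpow_of_nonneg (hh _) (inv_nonneg.2 hq.le)]
        rw [← ENNReal.ofReal_tsum_of_nonneg (fun _ => sq_nonneg _) hu,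
          ← ENNReal.ofReal_tsum_of_nonneg (fun _ => sq_nonneg _) hv,
          ← ENNReal.ofReal_tsum_of_nonneg hpow hsum,
          ENNReal.ofReal_rpow_of_nonneg (sq_nonneg_tsum u) hp,
          ENNReal.ofReal_rpow_of_nonneg (sq_nonneg_tsum v) hp,
          ENNReal.ofReal_rpow_of_nonneg hpow_tsum hq.le,
          ← ENNReal.ofReal_mul (hpow_sq u),
          ← ENNReal.ofReal_mul (mul_nonneg (hpow_sq u) (hpow_sq v))]
        ring_nf

theorem RieszKernel.exists_hlsBound [DecidableEq G] (hR : RieszKernel S N α R) (hG : PolyGrowth S N)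
    (hα : α < N) (hp1 : 1 < p) (hp : N + α < N * p) : ∃ C, 0 ≤ C ∧ HLSBound R p C := by
  have near_min : ∀ᶠ q in nhdsWithin (min p 2) (Set.Iio (min p 2)), 1 < q ∧ N + α < N * q := by
    refine nhdsWithin_le_nhds ((lt_mem_nhds (lt_min hp1 one_lt_two)).and ?_)
    refine (continuous_const_mul (N : ℝ)).continuousAt.eventually (lt_mem_nhds ?_)
    rcases min_choice p 2 with hmin | hmin <;> rw [hmin] <;> linarith
  obtain ⟨q, ⟨hq1, hNq⟩, hq⟩ := (near_min.and self_mem_nhdsWithin).exists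
  obtain ⟨hqp, hq2⟩ := lt_min_iff.1 hq
  have hq2' : 0 < 2 - q := by linarith
  obtain ⟨h, hh, hRh, hsum⟩ := hR.exists_le_translation_invariant hG (t := (2 - q)⁻¹) (by
    rw [← div_eq_mul_inv, lt_div_iff₀ hq2']
    linarith)
  exact ⟨_, Real.rpow_nonneg (tsum_nonneg fun x => Real.rpow_nonneg (hh x) _) _,
    hlsBound_of_le_translation_invariant (fun x y => (hR.1 x y).le) hh hRh hq1.le hq2 hqp.le hsum⟩

end RieszKernel

section Energy

variable [Group G] {S : Finset G} {a : G → ℝ} {lam : ℝ} {u v : G → ℝ}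

theorem grad_self_nonneg (S : Finset G) (u : G → ℝ) (x : G) : 0 ≤ grad S u u x :=
  mul_nonneg one_half_pos.le (Finset.sum_nonneg fun _ _ => mul_self_nonneg _)

theorem mul_sq_le_eDensity (S : Finset G) (a : G → ℝ) (lam : ℝ) (u : G → ℝ) (x : G) :
    (1 + lam * a x) * u x ^ 2 ≤ eDensity S a lam u x :=
  le_add_of_nonneg_left (add_nonneg (sq_nonneg _) (grad_self_nonneg S u x))

theorem sq_le_eDensity (ha : ∀ x, 0 ≤ a x) (hlam : 0 ≤ lam) (u : G → ℝ) (x : G) :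
    u x ^ 2 ≤ eDensity S a lam u x :=
  (le_mul_of_one_le_left (sq_nonneg _)
    (le_add_of_nonneg_right (mul_nonneg hlam (ha x)))).trans (mul_sq_le_eDensity S a lam u x)

theorem MemE.summable_sq (hu : MemE S a lam u) (ha : ∀ x, 0 ≤ a x) (hlam : 0 ≤ lam) :
    Summable fun x => u x ^ 2 :=
  hu.of_nonneg_of_le (fun _ => sq_nonneg _) (sq_le_eDensity ha hlam u)

theorem MemE.tsum_sq_le_normEsq (hu : MemE S a lam u) (ha : ∀ x, 0 ≤ a x) (hlam : 0 ≤ lam) :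
    ∑' x, u x ^ 2 ≤ normEsq S a lam u :=
  (hu.summable_sq ha hlam).tsum_le_tsum (sq_le_eDensity ha hlam u) hu

theorem normEsq_nonneg (ha : ∀ x, 0 ≤ a x) (hlam : 0 ≤ lam) (u : G → ℝ) :
    0 ≤ normEsq S a lam u :=
  tsum_nonneg fun x => (sq_nonneg _).trans (sq_le_eDensity ha hlam u x)

theorem MemE.tsum_subtype_sq_le (hu : MemE S a lam u) (ha : ∀ x, 0 ≤ a x) (hlam : 0 < lam)
    {T : Set G} {M : ℝ} (hM : 0 < M) (hT : ∀ x ∈ T, M ≤ a x) :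
    ∑' x : T, u x ^ 2 ≤ normEsq S a lam u / (lam * M) := by
  have density_nonneg (x : G) : 0 ≤ eDensity S a lam u x :=
    (sq_nonneg _).trans (sq_le_eDensity ha hlam.le u x)
  have mul_sq_le (x : T) : u x ^ 2 * (lam * M) ≤ eDensity S a lam u x :=
    calc u x ^ 2 * (lam * M) ≤ u x ^ 2 * (1 + lam * a x) := by
          gcongr
          nlinarith [hT x x.2]
      _ ≤ eDensity S a lam u x := by
          rw [mul_comm]
          exact mul_sq_le_eDensity S a lam u x
  rw [le_div_iff₀ (by positivity), ← tsum_mul_right]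
  calc ∑' x : T, u x ^ 2 * (lam * M) ≤ ∑' x : T, eDensity S a lam u x :=
        (((hu.summable_sq ha hlam.le).subtype T).mul_right _).tsum_le_tsum mul_sq_le (hu.subtype T)
    _ ≤ normEsq S a lam u := Summable.tsum_subtype_le _ T density_nonneg hu

theorem abs_mul_le_sq_add_sq (b c : ℝ) : |b * c| ≤ b ^ 2 + c ^ 2 := by
  rw [abs_mul, ← sq_abs b, ← sq_abs c]
  nlinarith [two_mul_le_add_sq |b| |c|, sq_nonneg |b|, sq_nonneg |c|]

theorem abs_grad_le (S : Finset G) (u v : G → ℝ) (x : G) :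
    |grad S u v x| ≤ grad S u u x + grad S v v x := by
  simp only [grad, ← mul_add, ← Finset.sum_add_distrib, ← sq, abs_mul (1 / 2 : ℝ), abs_one_div,
    abs_two]
  gcongr
  exact (Finset.abs_sum_le_sum_abs _ _).trans
    (Finset.sum_le_sum fun s _ => abs_mul_le_sq_add_sq _ _)

theorem abs_innerE_le (ha : ∀ x, 0 ≤ a x) (hlam : 0 ≤ lam) (hu : MemE S a lam u)
    (hv : MemE S a lam v) :
    |innerE S a lam u v| ≤ normEsq S a lam u + normEsq S a lam v := by
  refine tsum_of_norm_bounded (E := ℝ) (Summable.hasSum hu |>.add (Summable.hasSum hv)) fun x => ?_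
  have weight_nonneg : 0 ≤ 1 + lam * a x := add_nonneg zero_le_one (mul_nonneg hlam (ha x))
  calc |lap S u x * lap S v x + grad S u v x + (1 + lam * a x) * (u x * v x)|
      ≤ |lap S u x * lap S v x| + |grad S u v x| + (1 + lam * a x) * |u x * v x| := by
        rw [← abs_of_nonneg weight_nonneg, ← abs_mul, abs_of_nonneg weight_nonneg]
        exact abs_add_three _ _ _
    _ ≤ (lap S u x ^ 2 + lap S v x ^ 2) + (grad S u u x + grad S v v x) +
          (1 + lam * a x) * (u x ^ 2 + v x ^ 2) := by
        gcongr
        exacts [abs_mul_le_sq_add_sq _ _, abs_grad_le S u v x, abs_mul_le_sq_add_sq _ _]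
    _ = eDensity S a lam u x + eDensity S a lam v x := by
        simp only [eDensity]
        ring

theorem innerE_self (S : Finset G) (a : G → ℝ) (lam : ℝ) (u : G → ℝ) :
    innerE S a lam u u = normEsq S a lam u := by
  simp only [innerE, normEsq, eDensity, sq]

theorem lap_smul (S : Finset G) (t : ℝ) (u : G → ℝ) (x : G) :
    lap S (t • u) x = t * lap S u x := by
  simp only [lap, Pi.smul_apply, smul_eq_mul, Finset.mul_sum, mul_sub]

theorem grad_smul_right (S : Finset G) (t : ℝ) (u v : G → ℝ) (x : G) :
    grad S u (t • v) x = t * grad S u v x := by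
  simp only [grad, Pi.smul_apply, smul_eq_mul, Finset.mul_sum]
  exact Finset.sum_congr rfl fun s _ => by ring

theorem grad_smul_smul (S : Finset G) (t : ℝ) (u : G → ℝ) (x : G) :
    grad S (t • u) (t • u) x = t ^ 2 * grad S u u x := by
  simp only [grad, Pi.smul_apply, smul_eq_mul, Finset.mul_sum]
  exact Finset.sum_congr rfl fun s _ => by ring

theorem eDensity_smul (S : Finset G) (a : G → ℝ) (lam t : ℝ) (u : G → ℝ) :
    eDensity S a lam (t • u) = t ^ 2 • eDensity S a lam u := by
  ext x
  simp only [eDensity, lap_smul, grad_smul_smul, Pi.smul_apply, smul_eq_mul]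
  ring

theorem MemE.smul (hu : MemE S a lam u) (t : ℝ) : MemE S a lam (t • u) := by
  rw [MemE, eDensity_smul]
  exact Summable.const_smul (t ^ 2) hu

theorem normEsq_smul (S : Finset G) (a : G → ℝ) (lam t : ℝ) (u : G → ℝ) :
    normEsq S a lam (t • u) = t ^ 2 * normEsq S a lam u := by
  simp only [normEsq, eDensity_smul, Pi.smul_apply, smul_eq_mul, tsum_mul_left]

theorem innerE_smul_right (S : Finset G) (a : G → ℝ) (lam t : ℝ) (u v : G → ℝ) :
    innerE S a lam u (t • v) = t * innerE S a lam u v := by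
  rw [innerE, innerE, ← tsum_mul_left]
  refine tsum_congr fun x => ?_
  rw [lap_smul, grad_smul_right, Pi.smul_apply, smul_eq_mul]
  ring

theorem exists_forall_lt_wordDist_le (S : Finset G) {M : ℝ} (hfin : {x | a x ≤ M}.Finite) :
    ∃ r : ℝ, 0 < r ∧ ∀ x, r < (wordDist S x 1 : ℝ) → M ≤ a x := by
  obtain ⟨r, hr⟩ := (hfin.image fun x => (wordDist S x 1 : ℝ)).bddAbove
  refine ⟨max r 1, by positivity, fun x hx => le_of_not_gt fun hlt => ?_⟩
  exact ((le_max_left _ _).trans_lt hx).not_ge (hr ⟨x, hlt.le, rfl⟩)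

end Energy

section NonlocalPairing

theorem abs_rpow_sub_two_mul_abs (b : ℝ) {p : ℝ} (hp : 1 < p) :
    |b| ^ (p - 2) * |b| = |b| ^ (p - 1) := by
  rw [← Real.rpow_add_one' (abs_nonneg b) (by linarith)]
  ring_nf

theorem abs_rpow_sub_two_mul_self_mul_self (b : ℝ) {p : ℝ} (hp : 1 < p) :
    |b| ^ (p - 2) * b * b = |b| ^ p := by
  rw [mul_assoc, ← abs_mul_abs_self b, ← mul_assoc, abs_rpow_sub_two_mul_abs b hp,
    ← Real.rpow_add_one' (abs_nonneg b) (by linarith), sub_add_cancel]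

theorem abs_rpow_sub_two_mul_self_mul_le (b c : ℝ) {p : ℝ} (hp : 1 < p) :
    |(|b| ^ (p - 2) * b * c)| ≤ |b| ^ p + |c| ^ p := by
  have hmax : 0 ≤ max |b| |c| := le_max_of_le_left (abs_nonneg b)
  have : 0 ≤ p - 1 := by linarith
  calc |(|b| ^ (p - 2) * b * c)|
      = |b| ^ (p - 1) * |c| := by
        rw [abs_mul, abs_mul, Real.abs_rpow_of_nonneg (abs_nonneg b), abs_abs,
          abs_rpow_sub_two_mul_abs b hp]
    _ ≤ max |b| |c| ^ (p - 1) * max |b| |c| := by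
        gcongr
        exacts [le_max_left _ _, le_max_right _ _]
    _ = max |b| |c| ^ p := by
        rw [← Real.rpow_add_one' hmax (by linarith), sub_add_cancel]
    _ ≤ |b| ^ p + |c| ^ p := by
        rcases max_choice |b| |c| with hmax | hmax <;> rw [hmax]
        · exact le_add_of_nonneg_right (by positivity)
        · exact le_add_of_nonneg_left (by positivity)

variable [DecidableEq G] {R : G → G → ℝ} {p : ℝ} {u : G → ℝ}

theorem Kterm_self (R : G → G → ℝ) (hp : 1 < p) (u : G → ℝ) : Kterm R p u u = Dterm R p u := by
  simp only [Kterm, Dterm, abs_rpow_sub_two_mul_self_mul_self _ hp]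

theorem Kterm_smul_right (R : G → G → ℝ) (p t : ℝ) (u v : G → ℝ) :
    Kterm R p u (t • v) = t * Kterm R p u v := by
  rw [Kterm, Kterm, ← tsum_mul_left]
  refine tsum_congr fun x => ?_
  rw [Pi.smul_apply, smul_eq_mul]
  ring

theorem HLSBound.abs_Kterm_le {C : ℝ} (hC : HLSBound R p C) (hR : ∀ x y, 0 ≤ R x y) (hp : 1 < p)
    {v : G → ℝ} (hu : Summable fun x => u x ^ 2) (hv : Summable fun x => v x ^ 2) :
    |Kterm R p u v| ≤ Dterm R p u + C * (∑' x, v x ^ 2) ^ (p / 2) * (∑' x, u x ^ 2) ^ (p / 2) := by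
  obtain ⟨hsum_u, -⟩ := hC u u hu hu
  obtain ⟨hsum_v, hbound⟩ := hC v u hv hu
  refine (tsum_of_norm_bounded (E := ℝ) (hsum_u.hasSum.add hsum_v.hasSum) fun x => ?_).trans
    (add_le_add_right hbound _)
  have hconv : 0 ≤ conv R (fun y => |u y| ^ p) x := conv_nonneg hR (fun y => by positivity) x
  rw [Real.norm_eq_abs, abs_mul, abs_of_nonneg hconv, ← mul_add]
  gcongr
  exact abs_rpow_sub_two_mul_self_mul_le _ _ hp

theorem HLSBound.tsum_subtype_le {C : ℝ} (hC : HLSBound R p C) (hp : p ≠ 0)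
    (hu : Summable fun x => u x ^ 2) (T : Set G) :
    ∑' x : T, conv R (fun y => |u y| ^ p) x * |u x| ^ p ≤
      C * (∑' x : T, u x ^ 2) ^ (p / 2) * (∑' x, u x ^ 2) ^ (p / 2) := by
  have indicator_sq (x : G) : T.indicator u x ^ 2 = T.indicator (fun x => u x ^ 2) x := by
    by_cases hx : x ∈ T <;> simp [hx]
  have indicator_mul (x : G) : conv R (fun y => |u y| ^ p) x * |T.indicator u x| ^ p =
      T.indicator (fun x => conv R (fun y => |u y| ^ p) x * |u x| ^ p) x := by
    by_cases hx : x ∈ T <;> simp [hx, hp]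
  have hbound := (hC (T.indicator u) u (by simpa only [indicator_sq] using! hu.indicator T) hu).2
  simpa only [indicator_sq, indicator_mul, ← tsum_subtype T] using! hbound

end NonlocalPairing

section PalaisSmale

theorem tendsto_tail_bound (C K : ℝ) {M q : ℝ} (hM : 0 < M) (hq : 0 < q) :
    Tendsto (fun lam : ℝ => C * (K / (lam * M)) ^ q * K ^ q) atTop (nhds 0) := by
  have hbase : Tendsto (fun lam : ℝ => K / (lam * M)) atTop (nhds 0) :=
    tendsto_const_nhds.div_atTop (tendsto_id.atTop_mul_const hM)
  simpa [Real.zero_rpow hq.ne'] using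
    ((hbase.rpow_const (Or.inr hq.le)).const_mul C).mul_const (K ^ q)

variable [Group G] [DecidableEq G] {S : Finset G} {a : G → ℝ} {lam : ℝ} {R : G → G → ℝ}
  {p C : ℝ} {u : G → ℝ}

theorem Jd_self (S : Finset G) (a : G → ℝ) (lam : ℝ) (R : G → G → ℝ) (hp : 1 < p) (u : G → ℝ) :
    Jd S a lam R p u u = normEsq S a lam u - Dterm R p u := by
  rw [Jd, innerE_self, Kterm_self R hp]

theorem Jd_smul_right (S : Finset G) (a : G → ℝ) (lam : ℝ) (R : G → G → ℝ) (p t : ℝ)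
    (u v : G → ℝ) : Jd S a lam R p u (t • v) = t * Jd S a lam R p u v := by
  rw [Jd, innerE_smul_right, Kterm_smul_right, ← mul_sub, Jd]

theorem bddAbove_abs_Jd_unitBall (hC0 : 0 ≤ C) (hC : HLSBound R p C) (hR : ∀ x y, 0 ≤ R x y)
    (hp : 1 < p) (ha : ∀ x, 0 ≤ a x) (hlam : 0 ≤ lam) (hu : MemE S a lam u) :
    BddAbove {t | ∃ v, MemE S a lam v ∧ normEsq S a lam v ≤ 1 ∧ t = |Jd S a lam R p u v|} := by
  refine ⟨normEsq S a lam u + 1 +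
    (Dterm R p u + C * 1 ^ (p / 2) * (∑' x, u x ^ 2) ^ (p / 2)), ?_⟩
  rintro _ ⟨v, hv, hv1, rfl⟩
  have hv_sq : ∑' x, v x ^ 2 ≤ 1 := (hv.tsum_sq_le_normEsq ha hlam).trans hv1
  have : 0 ≤ ∑' x, u x ^ 2 := tsum_nonneg fun _ => sq_nonneg _
  calc |Jd S a lam R p u v|
      ≤ |innerE S a lam u v| + |Kterm R p u v| := abs_sub _ _
    _ ≤ (normEsq S a lam u + normEsq S a lam v) +
          (Dterm R p u + C * (∑' x, v x ^ 2) ^ (p / 2) * (∑' x, u x ^ 2) ^ (p / 2)) :=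
        add_le_add (abs_innerE_le ha hlam hu hv)
          (hC.abs_Kterm_le hR hp (hu.summable_sq ha hlam) (hv.summable_sq ha hlam))
    _ ≤ _ := by gcongr

theorem abs_Jd_le_dualNorm_mul (hC0 : 0 ≤ C) (hC : HLSBound R p C) (hR : ∀ x y, 0 ≤ R x y)
    (hp : 1 < p) (ha : ∀ x, 0 ≤ a x) (hlam : 0 ≤ lam) (hu : MemE S a lam u) {v : G → ℝ}
    (hv : MemE S a lam v) {t : ℝ} (ht : 0 < t) (hvt : normEsq S a lam v ≤ t ^ 2) :
    |Jd S a lam R p u v| ≤ dualNorm S a lam R p u * t := by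
  have unit_ball : normEsq S a lam (t⁻¹ • v) ≤ 1 := by
    rw [normEsq_smul, inv_pow]
    exact inv_mul_le_one_of_le₀ hvt (sq_nonneg t)
  have hle : |Jd S a lam R p u (t⁻¹ • v)| ≤ dualNorm S a lam R p u :=
    le_csSup (bddAbove_abs_Jd_unitBall hC0 hC hR hp ha hlam hu) ⟨_, hv.smul _, unit_ball, rfl⟩
  rwa [Jd_smul_right, abs_mul, abs_of_pos (inv_pos.2 ht), inv_mul_le_iff₀ ht, mul_comm] at hle

/-- With `E = ‖u‖²` and `D` the nonlocal term, `2pJ(u) = pE - D = (p - 1)E + (J'(u), u)`, and the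
pairing is at least `-(p - 1)/2 * (E + 1)` because `√E ≤ E + 1`. -/
theorem normEsq_le_of_Jfun_le (hC0 : 0 ≤ C) (hC : HLSBound R p C) (hR : ∀ x y, 0 ≤ R x y)
    (hp : 1 < p) (ha : ∀ x, 0 ≤ a x) (hlam : 0 ≤ lam) (hu : MemE S a lam u) {b : ℝ}
    (hJ : Jfun S a lam R p u ≤ b) (hdual : dualNorm S a lam R p u ≤ (p - 1) / 2) :
    normEsq S a lam u ≤ 4 * p * b / (p - 1) + 1 := by
  have hE : 0 ≤ normEsq S a lam u := normEsq_nonneg ha hlam u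
  have pairing : |normEsq S a lam u - Dterm R p u| ≤ (p - 1) / 2 * (normEsq S a lam u + 1) := by
    rw [← Jd_self S a lam R hp]
    calc |Jd S a lam R p u u| ≤ dualNorm S a lam R p u * (normEsq S a lam u + 1) :=
          abs_Jd_le_dualNorm_mul hC0 hC hR hp ha hlam hu hu (by positivity) (by nlinarith)
      _ ≤ _ := by gcongr
  have energy : p * normEsq S a lam u - Dterm R p u ≤ 2 * p * b := by
    calc p * normEsq S a lam u - Dterm R p u = 2 * p * Jfun S a lam R p u := by
          rw [Jfun]
          field_simp
      _ ≤ 2 * p * b := by gcongr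
  rw [← sub_le_iff_le_add, le_div_iff₀ (by linarith)]
  linarith [(abs_le.1 pairing).1]

theorem PSseq.eventually_normEsq_le {c : ℝ} {U : ℕ → G → ℝ} (hU : PSseq S a lam R p c U)
    (hC0 : 0 ≤ C) (hC : HLSBound R p C) (hR : ∀ x y, 0 ≤ R x y) (hp : 1 < p) (ha : ∀ x, 0 ≤ a x)
    (hlam : 0 ≤ lam) {b : ℝ} (hcb : c < b) :
    ∀ᶠ n in atTop, normEsq S a lam (U n) ≤ 4 * p * b / (p - 1) + 1 := by
  obtain ⟨hmem, hJ, hdual⟩ := hU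
  filter_upwards [hJ.eventually_le_const hcb,
    hdual.eventually_le_const (show 0 < (p - 1) / 2 by linarith)] with n hJn hdualn
  exact normEsq_le_of_Jfun_le hC0 hC hR hp ha hlam (hmem n) hJn hdualn

theorem MemE.tsum_subtype_conv_mul_le (hu : MemE S a lam u) (hC0 : 0 ≤ C) (hC : HLSBound R p C)
    (hp : 0 < p) (ha : ∀ x, 0 ≤ a x) (hlam : 0 < lam) {T : Set G} {M K : ℝ} (hM : 0 < M)
    (hT : ∀ x ∈ T, M ≤ a x) (hK : normEsq S a lam u ≤ K) :
    ∑' x : T, conv R (fun y => |u y| ^ p) x * |u x| ^ p ≤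
      C * (K / (lam * M)) ^ (p / 2) * K ^ (p / 2) := by
  have : 0 ≤ ∑' x : T, u x ^ 2 := tsum_nonneg fun _ => sq_nonneg _
  have : 0 ≤ ∑' x, u x ^ 2 := tsum_nonneg fun _ => sq_nonneg _
  have : 0 ≤ K := (normEsq_nonneg ha hlam.le u).trans hK
  have sq_T_le : ∑' x : T, u x ^ 2 ≤ K / (lam * M) :=
    (hu.tsum_subtype_sq_le ha hlam hM hT).trans (by gcongr)
  have sq_le : ∑' x, u x ^ 2 ≤ K := (hu.tsum_sq_le_normEsq ha hlam.le).trans hK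
  exact (hC.tsum_subtype_le hp.ne' (hu.summable_sq ha hlam.le) T).trans (by gcongr)

theorem PS_uniform_tail_estimate_general {N : ℕ} (hgrowth : PolyGrowth S N) {α : ℝ} (hαN : α < N)
    (hR : RieszKernel S N α R) (hp1 : 1 < p) (hp : N + α < N * p) (ha : ∀ x, 0 ≤ a x)
    (hA2 : CondA2 a) (cstar : ℝ) :
    ∀ ε : ℝ, 0 < ε → ∃ lamε rε : ℝ, 0 < lamε ∧ 0 < rε ∧
      ∀ lam : ℝ, lamε ≤ lam → ∀ c : ℝ, c ≤ cstar → ∀ U : ℕ → G → ℝ,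
        PSseq S a lam R p c U →
        Filter.limsup (fun n => ∑' x : {x : G // rε < (wordDist S x 1 : ℝ)},
          conv R (fun y => |U n y| ^ p) (x : G) * |U n (x : G)| ^ p) atTop ≤ ε := by
  intro ε hε
  obtain ⟨C, hC0, hC⟩ := hR.exists_hlsBound hgrowth hαN hp1 hp
  obtain ⟨M, hM, hfin, -⟩ := hA2
  obtain ⟨rε, hrε, hwell⟩ := exists_forall_lt_wordDist_le S hfin
  have hR0 (x y : G) : 0 ≤ R x y := (hR.1 x y).le
  have hp0 : 0 < p := by linarith
  obtain ⟨lamε, hlamε⟩ := eventually_atTop.1 ((eventually_gt_atTop 0).and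
    ((tendsto_tail_bound C (4 * p * (cstar + 1) / (p - 1) + 1) hM
      (half_pos hp0)).eventually_le_const hε))
  refine ⟨lamε, rε, (hlamε lamε le_rfl).1, hrε, fun lam hlam c hc U hU => ?_⟩
  obtain ⟨hlam0, hsmall⟩ := hlamε lam hlam
  refine limsup_le_of_le (isCoboundedUnder_le_of_le atTop (x := 0) fun n => tsum_nonneg fun x =>
    mul_nonneg (conv_nonneg hR0 (fun y => by positivity) _) (by positivity)) ?_
  filter_upwards [hU.eventually_normEsq_le hC0 hC hR0 hp1 ha hlam0.le
    (show c < cstar + 1 by linarith)] with n hn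
  exact ((hU.1 n).tsum_subtype_conv_mul_le hC0 hC hp0 ha hlam0 (T := {x | rε < wordDist S x 1})
    hM hwell hn).trans hsmall

end PalaisSmale

theorem PS_uniform_tail_estimate
    {G : Type*} [Group G] [Countable G] [DecidableEq G]
    (S : Finset G) (hSsymm : ∀ s ∈ S, s⁻¹ ∈ S)
    (hSgen : Subgroup.closure (S : Set G) = ⊤)
    (N : ℕ) (hN : 2 ≤ N) (hgrowth : PolyGrowth S N)
    (α : ℝ) (hα0 : 0 < α) (hαN : α < (N : ℝ))
    (R : G → G → ℝ) (hR : RieszKernel S N α R)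
    (p : ℝ) (hp : ((N : ℝ) + α) / (N : ℝ) < p)
    (a : G → ℝ) (ha : ∀ x, 0 ≤ a x)
    (hA1 : CondA1 S a) (hA2 : CondA2 a)
    (cstar : ℝ) (hcstar : 0 < cstar) :
    ∀ ε : ℝ, 0 < ε → ∃ lamε rε : ℝ, 0 < lamε ∧ 0 < rε ∧
      ∀ lam : ℝ, lamε ≤ lam → ∀ c : ℝ, c ≤ cstar → ∀ U : ℕ → G → ℝ,
        PSseq S a lam R p c U →
        Filter.limsup (fun n => ∑' x : {x : G // rε < (wordDist S x 1 : ℝ)},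
          conv R (fun y => |U n y| ^ p) (x : G) * |U n (x : G)| ^ p) atTop ≤ ε := by
  have hN0 : (0 : ℝ) < N := by exact_mod_cast two_pos.trans_le hN
  exact PS_uniform_tail_estimate_general hgrowth hαN hR
    (((one_lt_div hN0).2 (lt_add_of_pos_right _ hα0)).trans hp) ((div_lt_iff₀' hN0).1 hp)
    ha hA2 cstar

end Choquard
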